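/- arXiv:math/9503212 — 2 statements merged into one kernel-verified Lean document; each statement's English description precedes it below -/
import Mathlib

section
/- Let X_1,…,X_k be jointly symmetric q-stable random variables (0<q≤2), i.e., X_i = ⟨Y, ξ_i⟩ where Y is a symmetric q-stable random vector in ℝ^n with characteristic function exp(-‖Σθ_i s_i‖_{L^q}^q). Let m<k and let f, g be even continuous positive definite functions on ℝ^m and ℝ^{k-m}. Then E[f(X_1,…,X_m) g(X_{m+1},…,X_k)] ≥ E[f(X_1,…,X_m)]·E[g(X_{m+1},…,X_k)]. -/
open MeasureTheory
open scoped RealInnerProductSpace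

/-!
Since `q / 2 ≤ 1`, the parallelogram law of a Hilbert space degrades to the inequality
`‖x + y‖ ^ q + ‖x - y‖ ^ q ≤ 2 * (‖x‖ ^ q + ‖y‖ ^ q)`, which passes to `L^q` by integration. By
convexity of the exponential, the characteristic function `φ` of `Y` therefore satisfies
`φ a * φ b ≤ (φ (a + b) + φ (a - b)) / 2`. As functions of `Y`, `f` and `g` are real-valued
characteristic functions of finite measures `μ` and `ν`, and so is their product, both for the
convolution of `μ` and `ν` and for that of `μ` and the reflection of `ν`. Exchanging the order of
integration turns `E[f g]` into the integral of `φ (a + b)`, and also of `φ (a - b)`, against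
`μ × ν`, while `E[f] * E[g]` is the integral of `φ a * φ b`.
-/

section HalfParallelogram

variable {F : Type*} [NormedAddCommGroup F]

theorem norm_add_rpow_add_norm_sub_rpow_le (𝕜 : Type*) [RCLike 𝕜] [InnerProductSpace 𝕜 F]
    {q : ℝ} (hq0 : 0 ≤ q) (hq2 : q ≤ 2) (x y : F) :
    ‖x + y‖ ^ q + ‖x - y‖ ^ q ≤ 2 * (‖x‖ ^ q + ‖y‖ ^ q) := by
  have rpow_eq_sq_rpow (z : F) : ‖z‖ ^ q = (‖z‖ ^ 2) ^ (q / 2) := by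
    rw [← Real.rpow_natCast_mul (norm_nonneg z), Nat.cast_ofNat, mul_div_cancel₀ q two_ne_zero]
  have parallelogram : 2⁻¹ * ‖x + y‖ ^ 2 + 2⁻¹ * ‖x - y‖ ^ 2 = ‖x‖ ^ 2 + ‖y‖ ^ 2 := by
    linarith [parallelogram_law_with_norm_mul 𝕜 x y]
  have concave : 2⁻¹ * (‖x + y‖ ^ 2) ^ (q / 2) + 2⁻¹ * (‖x - y‖ ^ 2) ^ (q / 2) ≤
      (‖x‖ ^ 2 + ‖y‖ ^ 2) ^ (q / 2) := by
    rw [← parallelogram]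
    exact (Real.concaveOn_rpow (by positivity) (by linarith)).2 (sq_nonneg ‖x + y‖)
      (sq_nonneg ‖x - y‖) (by norm_num) (by norm_num) (by norm_num)
  have subadditive : (‖x‖ ^ 2 + ‖y‖ ^ 2) ^ (q / 2) ≤
      (‖x‖ ^ 2) ^ (q / 2) + (‖y‖ ^ 2) ^ (q / 2) :=
    Real.rpow_add_le_add_rpow (sq_nonneg _) (sq_nonneg _) (by positivity) (by linarith)
  simp only [rpow_eq_sq_rpow]
  linarith

variable {α : Type*} [MeasurableSpace α] {μ : Measure α} {p : ENNReal}

theorem norm_Lp_rpow_toReal_eq_integral (hp0 : p ≠ 0) (hp_top : p ≠ ⊤) (h : Lp F p μ) :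
    ‖h‖ ^ p.toReal = ∫ x, ‖h x‖ ^ p.toReal ∂μ := by
  have integral_norm_rpow_nonneg : 0 ≤ ∫ x, ‖h x‖ ^ p.toReal ∂μ :=
    integral_nonneg fun x => by positivity
  rw [Lp.norm_def, toReal_eLpNorm (Lp.aestronglyMeasurable h),
    lpNorm_eq_integral_norm_rpow_toReal hp0 hp_top (Lp.aestronglyMeasurable h),
    Real.rpow_inv_rpow integral_norm_rpow_nonneg (ENNReal.toReal_pos hp0 hp_top).ne']

theorem norm_Lp_add_rpow_add_norm_Lp_sub_rpow_le (𝕜 : Type*) [RCLike 𝕜] [InnerProductSpace 𝕜 F]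
    (hp0 : p ≠ 0) (hp2 : p ≤ 2) (h₁ h₂ : Lp F p μ) :
    ‖h₁ + h₂‖ ^ p.toReal + ‖h₁ - h₂‖ ^ p.toReal ≤
      2 * (‖h₁‖ ^ p.toReal + ‖h₂‖ ^ p.toReal) := by
  have hp_top : p ≠ ⊤ := ne_top_of_le_ne_top ENNReal.ofNat_ne_top hp2
  have integrable_norm_rpow (h : Lp F p μ) : Integrable (fun x => ‖h x‖ ^ p.toReal) μ :=
    (Lp.memLp h).integrable_norm_rpow hp0 hp_top
  simp only [norm_Lp_rpow_toReal_eq_integral hp0 hp_top]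
  rw [← integral_add (integrable_norm_rpow _) (integrable_norm_rpow _),
    ← integral_add (integrable_norm_rpow _) (integrable_norm_rpow _), ← integral_const_mul]
  refine integral_mono_ae ((integrable_norm_rpow _).add (integrable_norm_rpow _))
    (((integrable_norm_rpow _).add (integrable_norm_rpow _)).const_mul 2) ?_
  filter_upwards [Lp.coeFn_add h₁ h₂, Lp.coeFn_sub h₁ h₂] with x hadd hsub
  rw [hadd, hsub]
  exact norm_add_rpow_add_norm_sub_rpow_le 𝕜 ENNReal.toReal_nonneg
    (ENNReal.toReal_mono ENNReal.ofNat_ne_top hp2) (h₁ x) (h₂ x)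

end HalfParallelogram

theorem exp_neg_mul_exp_neg_le_half_add {a b c d : ℝ} (h : c + d ≤ 2 * (a + b)) :
    Real.exp (-a) * Real.exp (-b) ≤ (Real.exp (-c) + Real.exp (-d)) / 2 := by
  calc Real.exp (-a) * Real.exp (-b) = Real.exp (-a + -b) := (Real.exp_add _ _).symm
    _ ≤ Real.exp (2⁻¹ * -c + 2⁻¹ * -d) := Real.exp_le_exp.2 (by linarith)
    _ ≤ 2⁻¹ * Real.exp (-c) + 2⁻¹ * Real.exp (-d) :=
      convexOn_exp.2 (Set.mem_univ _) (Set.mem_univ _) (by norm_num) (by norm_num) (by norm_num)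
    _ = (Real.exp (-c) + Real.exp (-d)) / 2 := by ring

section CharFun

variable {E : Type*} [NormedAddCommGroup E] [InnerProductSpace ℝ E] [MeasurableSpace E]
  [BorelSpace E]

theorem charFun_map_neg (ν : Measure E) (y : E) :
    charFun (ν.map fun x => -x) y = charFun ν (-y) := by
  simpa only [neg_one_smul] using charFun_map_smul (μ := ν) (-1) y

theorem charFun_map_neg_sum_smul {ι : Type*} [Fintype ι] (μ : Measure (ι → ℝ)) (ξ : ι → E)
    (y : E) :
    charFun (μ.map fun t => -∑ i, t i • ξ i) y =
      ∫ t, Complex.exp (-(∑ i, ⟪y, ξ i⟫ * t i : ℝ) * Complex.I) ∂μ := by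
  have hmeas : Measurable fun t : ι → ℝ => -∑ i, t i • ξ i :=
    Continuous.measurable (by fun_prop)
  rw [charFun_apply, integral_map hmeas.aemeasurable (by fun_prop)]
  simp only [inner_neg_left, sum_inner, real_inner_smul_left, real_inner_comm y (ξ _),
    mul_comm (inner ℝ _ _), Complex.ofReal_neg]

variable [SecondCountableTopology E]

theorem integral_charFun_comm (μ ν : Measure E) [IsFiniteMeasure μ] [IsFiniteMeasure ν] :
    ∫ y, charFun μ y ∂ν = ∫ x, charFun ν x ∂μ := by
  have integrable_exp : Integrable (fun z : E × E => Complex.exp (⟪z.2, z.1⟫ * Complex.I))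
      (ν.prod μ) :=
    .of_bound (by fun_prop) 1 (.of_forall fun z => (Complex.norm_exp_ofReal_mul_I _).le)
  simp only [charFun_apply]
  rw [integral_integral_swap integrable_exp]
  simp only [real_inner_comm]

variable {μ ν ρ : Measure E} {f g φ : E → ℝ}

theorem measurable_of_charFun_eq [SFinite μ] (hf : ∀ y, charFun μ y = f y) : Measurable f := by
  have hre : Measurable fun y => (charFun μ y).re := Complex.measurable_re.comp measurable_charFun
  simpa only [hf, Complex.ofReal_re] using hre

variable [IsFiniteMeasure μ]

theorem integrable_of_charFun_eq (hf : ∀ y, charFun μ y = f y) {α : Type*} [MeasurableSpace α]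
    {P : Measure α} [IsFiniteMeasure P] {Z : α → E} (hZ : AEMeasurable Z P) :
    Integrable (fun a => f (Z a)) P := by
  refine .of_bound ((measurable_of_charFun_eq hf).comp_aemeasurable hZ).aestronglyMeasurable
    (μ.real Set.univ) (.of_forall fun a => ?_)
  simpa only [hf, Complex.norm_real] using norm_charFun_le (μ := μ) (Z a)

variable [IsFiniteMeasure ν] [IsFiniteMeasure ρ]

theorem integral_eq_integral_of_charFun_eq (hρ : ∀ x, charFun ρ x = φ x)
    (hμ : ∀ y, charFun μ y = f y) : ∫ y, f y ∂ρ = ∫ x, φ x ∂μ := by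
  have h := integral_charFun_comm μ ρ
  simp only [hρ, hμ, integral_complex_ofReal] at h
  exact_mod_cast h

theorem integral_mul_eq_integral_add_of_charFun_eq (hρ : ∀ x, charFun ρ x = φ x)
    (hμ : ∀ y, charFun μ y = f y) (hν : ∀ y, charFun ν y = g y) :
    ∫ y, f y * g y ∂ρ = ∫ z, φ (z.1 + z.2) ∂(μ.prod ν) := by
  have hconv (y : E) : charFun (μ ∗ ν) y = (f y * g y : ℝ) := by
    rw [charFun_conv, hμ, hν, Complex.ofReal_mul]
  rw [integral_eq_integral_of_charFun_eq hρ hconv, Measure.conv,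
    integral_map (by fun_prop) (measurable_of_charFun_eq hρ).aestronglyMeasurable]

theorem integral_mul_eq_integral_sub_of_charFun_eq (hρ : ∀ x, charFun ρ x = φ x)
    (hμ : ∀ y, charFun μ y = f y) (hν : ∀ y, charFun ν y = g y) :
    ∫ y, f y * g y ∂ρ = ∫ z, φ (z.1 - z.2) ∂(μ.prod ν) := by
  have hneg (y : E) : charFun (ν.map fun x => -x) y = g y := by
    rw [charFun_map_neg, charFun_neg, hν, Complex.conj_ofReal]
  have hmap : μ.prod (ν.map fun x => -x) = (μ.prod ν).map (Prod.map id fun x => -x) := by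
    rw [← Measure.map_prod_map _ _ measurable_id measurable_neg, Measure.map_id]
  have hφ : Measurable fun z : E × E => φ (z.1 + z.2) :=
    (measurable_of_charFun_eq hρ).comp measurable_add
  rw [integral_mul_eq_integral_add_of_charFun_eq hρ hμ hneg, hmap,
    integral_map (by fun_prop) hφ.aestronglyMeasurable]
  simp only [Prod.map_fst, Prod.map_snd, id_eq, sub_eq_add_neg]

theorem integral_mul_integral_le_of_charFun_eq (hρ : ∀ x, charFun ρ x = φ x)
    (hφ : ∀ a b, φ a * φ b ≤ (φ (a + b) + φ (a - b)) / 2)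
    (hμ : ∀ y, charFun μ y = f y) (hν : ∀ y, charFun ν y = g y) :
    (∫ y, f y ∂ρ) * (∫ y, g y ∂ρ) ≤ ∫ y, f y * g y ∂ρ := by
  have hadd : Integrable (fun z : E × E => φ (z.1 + z.2)) (μ.prod ν) :=
    integrable_of_charFun_eq hρ (by fun_prop)
  have hsub : Integrable (fun z : E × E => φ (z.1 - z.2)) (μ.prod ν) :=
    integrable_of_charFun_eq hρ (by fun_prop)
  calc (∫ y, f y ∂ρ) * (∫ y, g y ∂ρ)
      = ∫ z, φ z.1 * φ z.2 ∂(μ.prod ν) := by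
        rw [integral_eq_integral_of_charFun_eq hρ hμ, integral_eq_integral_of_charFun_eq hρ hν,
          integral_prod_mul]
    _ ≤ ∫ z, (φ (z.1 + z.2) + φ (z.1 - z.2)) / 2 ∂(μ.prod ν) :=
        integral_mono ((integrable_of_charFun_eq hρ aemeasurable_id).mul_prod
          (integrable_of_charFun_eq hρ aemeasurable_id)) ((hadd.add hsub).div_const 2)
          fun z => hφ z.1 z.2
    _ = ∫ y, f y * g y ∂ρ := by
        rw [integral_div, integral_add hadd hsub,
          ← integral_mul_eq_integral_add_of_charFun_eq hρ hμ hν,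
          ← integral_mul_eq_integral_sub_of_charFun_eq hρ hμ hν, add_self_div_two]

theorem stable_posdef_correlation_general {α F Ω ι κ : Type*} [MeasurableSpace α]
    {m : Measure α} [NormedAddCommGroup F] [InnerProductSpace ℝ F] [MeasurableSpace Ω]
    {P : Measure Ω} [IsFiniteMeasure P] [Fintype ι] [Fintype κ]
    {q : ℝ} (hq0 : 0 < q) (hq2 : q ≤ 2) {Y : Ω → E} (hY : AEMeasurable Y P)
    (S : E →ₗ[ℝ] Lp F (ENNReal.ofReal q) m)
    (hchar : ∀ θ, ∫ ω, Complex.exp (⟪θ, Y ω⟫ * Complex.I) ∂P =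
      Complex.exp (-(‖S θ‖ ^ q : ℝ)))
    (ξ : ι → E) (η : κ → E) {f : (ι → ℝ) → ℝ} {g : (κ → ℝ) → ℝ}
    {μ : Measure (ι → ℝ)} [IsFiniteMeasure μ] {ν : Measure (κ → ℝ)} [IsFiniteMeasure ν]
    (hf : ∀ u, (f u : ℂ) = ∫ t, Complex.exp (-(∑ i, u i * t i : ℝ) * Complex.I) ∂μ)
    (hg : ∀ u, (g u : ℂ) = ∫ t, Complex.exp (-(∑ j, u j * t j : ℝ) * Complex.I) ∂ν) :
    (∫ ω, f (fun i => ⟪Y ω, ξ i⟫) ∂P) * (∫ ω, g (fun j => ⟪Y ω, η j⟫) ∂P) ≤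
      ∫ ω, f (fun i => ⟪Y ω, ξ i⟫) * g (fun j => ⟪Y ω, η j⟫) ∂P := by
  have hρ (θ : E) : charFun (P.map Y) θ = Real.exp (-‖S θ‖ ^ q) := by
    rw [charFun_apply, integral_map hY (by fun_prop)]
    simpa only [real_inner_comm, Complex.ofReal_exp, Complex.ofReal_neg] using hchar θ
  have hμ (y : E) := (charFun_map_neg_sum_smul μ ξ y).trans (hf fun i => ⟪y, ξ i⟫).symm
  have hν (y : E) := (charFun_map_neg_sum_smul ν η y).trans (hg fun j => ⟪y, η j⟫).symm
  have hφ (a b : E) : Real.exp (-‖S a‖ ^ q) * Real.exp (-‖S b‖ ^ q) ≤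
      (Real.exp (-‖S (a + b)‖ ^ q) + Real.exp (-‖S (a - b)‖ ^ q)) / 2 := by
    refine exp_neg_mul_exp_neg_le_half_add ?_
    simpa only [map_add, map_sub, ENNReal.toReal_ofReal hq0.le] using
      norm_Lp_add_rpow_add_norm_Lp_sub_rpow_le ℝ (ENNReal.ofReal_pos.2 hq0).ne'
        (by simpa using hq2) (S a) (S b)
  have hf_meas := measurable_of_charFun_eq hμ
  have hg_meas := measurable_of_charFun_eq hν
  have h := integral_mul_integral_le_of_charFun_eq hρ hφ hμ hν
  rwa [integral_map hY hf_meas.aestronglyMeasurable, integral_map hY hg_meas.aestronglyMeasurable,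
    integral_map hY (hf_meas.fun_mul hg_meas).aestronglyMeasurable] at h

end CharFun

/-- Theorem 1: correlation inequality for even continuous positive definite functions
of jointly symmetric `q`-stable random variables. -/
theorem stable_posdef_correlation
    (q : ℝ) (hq0 : 0 < q) (hq2 : q ≤ 2)
    (n k m : ℕ) (hm : m < k)
    (Ω : Type*) [MeasureSpace Ω] [IsProbabilityMeasure (volume : Measure Ω)]
    (Y : Ω → EuclideanSpace ℝ (Fin n)) (hY : Measurable Y)
    (s : Fin n → Lp ℝ (ENNReal.ofReal q) (volume.restrict (Set.Icc (0:ℝ) 1)))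
    -- Y is a symmetric q-stable random vector with characteristic function
    -- exp(-‖∑ θ i • s i‖_{L^q}^q)
    (hchar : ∀ θ : EuclideanSpace ℝ (Fin n),
      ∫ ω, Complex.exp ((⟪θ, Y ω⟫ : ℝ) * Complex.I) =
        Complex.exp (-(‖∑ i, θ i • s i‖ ^ q : ℝ)))
    (ξ : Fin k → EuclideanSpace ℝ (Fin n))
    (f : (Fin m → ℝ) → ℝ) (g : (Fin (k - m) → ℝ) → ℝ)
    (hfc : Continuous f) (hgc : Continuous g)
    (hfe : ∀ u, f (-u) = f u) (hge : ∀ u, g (-u) = g u)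
    -- f and g are positive definite: Fourier transforms of finite symmetric measures
    (hf : ∃ μ : Measure (Fin m → ℝ), IsFiniteMeasure μ ∧ μ.map (fun t => -t) = μ ∧
      ∀ u, (f u : ℂ) = ∫ t, Complex.exp (-(∑ i, u i * t i : ℝ) * Complex.I) ∂μ)
    (hg : ∃ ν : Measure (Fin (k - m) → ℝ), IsFiniteMeasure ν ∧ ν.map (fun t => -t) = ν ∧
      ∀ u, (g u : ℂ) = ∫ t, Complex.exp (-(∑ i, u i * t i : ℝ) * Complex.I) ∂ν) :
    ∫ ω, f (fun i => ⟪Y ω, ξ (Fin.castLE hm.le i)⟫) *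
        g (fun j => ⟪Y ω, ξ (Fin.cast (Nat.add_sub_cancel' hm.le) (Fin.natAdd m j))⟫) ≥
      (∫ ω, f (fun i => ⟪Y ω, ξ (Fin.castLE hm.le i)⟫)) *
      (∫ ω, g (fun j => ⟪Y ω, ξ (Fin.cast (Nat.add_sub_cancel' hm.le) (Fin.natAdd m j))⟫)) := by
  obtain ⟨μ, _, -, hμ⟩ := hf
  obtain ⟨ν, _, -, hν⟩ := hg
  exact stable_posdef_correlation_general hq0 hq2 hY.aemeasurable
    (Fintype.linearCombination ℝ s ∘ₗ (WithLp.linearEquiv 2 ℝ (Fin n → ℝ)).toLinearMap)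
    hchar _ _ hμ hν
end

section
/- Let F ⊂ ℝ^k be a symmetric convex set with compact closure and nonempty interior. Then ∫_F (x_1² - 1) exp(-‖x‖²/2) dx < 0. -/
open MeasureTheory

open ProbabilityTheory Set
open scoped ENNReal NNReal RealInnerProductSpace

/-!
Let `φ t` be the Gaussian mass of the section of `F` at height `t` in the direction of a unit
vector `v`, so that the integral is a positive multiple of `∫ (t² - 1) φ(t)` against the standard
Gaussian measure on the line. By the Prékopa–Leindler inequality `φ` is log-concave, and it is even
since `F` is symmetric, so it is non-increasing in `|t|`. As `t² - 1` has Gaussian mean zero and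
changes sign at `|t| = 1`, the integral equals `∫ (t² - 1) (φ(t) - φ(1))`, whose integrand is
nowhere positive; it is therefore negative unless `φ` is almost everywhere constant. A nonzero
constant is impossible because `∫ φ` with respect to Lebesgue measure is finite: if `r • v ∉ F`,
lines parallel to `v` meet `F` in length at most `2 |r|`.
-/

section OneDimensional

open scoped Pointwise

lemma volume_add_volume_le_volume_add_of_isCompact {A B : Set ℝ} (hA : IsCompact A)
    (hB : IsCompact B) (hA₀ : A.Nonempty) (hB₀ : B.Nonempty) :
    volume A + volume B ≤ volume (A + B) := by
  obtain ⟨a, haA, ha⟩ := hA.exists_isGreatest hA₀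
  obtain ⟨b, hbB, hb⟩ := hB.exists_isLeast hB₀
  have hB_meas : MeasurableSet (a +ᵥ B) := (hB.vadd a).measurableSet
  -- The translates `b + A` and `a + B` lie on either side of `a + b`.
  have h_inter : volume ((b +ᵥ A) ∩ (a +ᵥ B)) = 0 := by
    refine measure_mono_null (t := {a + b}) ?_ (by simp)
    rintro _ ⟨⟨x, hx, rfl⟩, ⟨y, hy, hxy⟩⟩
    have hxa : x ≤ a := ha hx
    have hby : b ≤ y := hb hy
    simp only [vadd_eq_add, mem_singleton_iff] at hxy ⊢
    linarith
  calc volume A + volume B = volume (b +ᵥ A) + volume (a +ᵥ B) := by simp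
    _ = volume ((b +ᵥ A) ∪ (a +ᵥ B)) := by
      rw [← measure_union_add_inter _ hB_meas, h_inter, add_zero]
    _ ≤ volume (A + B) := by
      refine measure_mono (union_subset ?_ ?_)
      · rintro _ ⟨x, hx, rfl⟩
        exact ⟨x, hx, b, hbB, add_comm x b⟩
      · rintro _ ⟨y, hy, rfl⟩
        exact ⟨a, haA, y, hy, rfl⟩

lemma volume_add_volume_le_volume_add {A B : Set ℝ} (hA : MeasurableSet A)
    (hB : MeasurableSet B) (hA₀ : A.Nonempty) (hB₀ : B.Nonempty) :
    volume A + volume B ≤ volume (A + B) := by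
  obtain ⟨x, hx⟩ := hA₀
  obtain ⟨y, hy⟩ := hB₀
  rcases eq_or_ne (volume A) 0 with hA' | hA'
  · calc volume A + volume B = volume (x +ᵥ B) := by simp [hA']
      _ ≤ volume (A + B) := measure_mono (vadd_set_subset_add hx)
  rcases eq_or_ne (volume B) 0 with hB' | hB'
  · calc volume A + volume B = volume (y +ᵥ A) := by simp [hB']
      _ ≤ volume (A + B) := measure_mono (add_comm A B ▸ vadd_set_subset_add hy)
  refine le_of_forall_lt fun r hr => ?_
  obtain ⟨s, hs, t, ht, hrst⟩ := ENNReal.exists_lt_add_of_lt_add hr hA' hB'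
  obtain ⟨K, hKA, hK, hsK⟩ := hA.exists_lt_isCompact hs
  obtain ⟨L, hLB, hL, htL⟩ := hB.exists_lt_isCompact ht
  have hK₀ : K.Nonempty := nonempty_of_measure_ne_zero (pos_of_gt hsK).ne'
  have hL₀ : L.Nonempty := nonempty_of_measure_ne_zero (pos_of_gt htL).ne'
  calc r < s + t := hrst
    _ ≤ volume K + volume L := add_le_add hsK.le htL.le
    _ ≤ volume (K + L) := volume_add_volume_le_volume_add_of_isCompact hK hL hK₀ hL₀
    _ ≤ volume (A + B) := measure_mono (add_subset_add hKA hLB)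

lemma ofReal_mul_volume_add_ofReal_mul_volume_le {A B : Set ℝ} (hA : MeasurableSet A)
    (hB : MeasurableSet B) (hA₀ : A.Nonempty) (hB₀ : B.Nonempty) {a b : ℝ} (ha : 0 ≤ a)
    (hb : 0 ≤ b) :
    ENNReal.ofReal a * volume A + ENNReal.ofReal b * volume B ≤ volume (a • A + b • B) := by
  calc ENNReal.ofReal a * volume A + ENNReal.ofReal b * volume B
      = volume (a • A) + volume (b • B) := by
        simp [Measure.addHaar_smul, abs_of_nonneg ha, abs_of_nonneg hb]
    _ ≤ volume (a • A + b • B) := volume_add_volume_le_volume_add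
        (hA.const_smul₀ a) (hB.const_smul₀ b) hA₀.smul_set hB₀.smul_set

lemma lintegral_eq_lintegral_measure_ofReal_lt {α : Type*} [MeasurableSpace α] {μ : Measure α}
    {f : α → ℝ≥0∞} (hf : Measurable f) (hf_top : ∀ x, f x ≠ ∞) :
    ∫⁻ x, f x ∂μ = ∫⁻ t in Ioi (0 : ℝ), μ {x | ENNReal.ofReal t < f x} := by
  calc ∫⁻ x, f x ∂μ = ∫⁻ x, ENNReal.ofReal (f x).toReal ∂μ := by
        simp only [ENNReal.ofReal_toReal (hf_top _)]
    _ = ∫⁻ t in Ioi (0 : ℝ), μ {x | t < (f x).toReal} :=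
        lintegral_eq_lintegral_meas_lt μ (.of_forall fun _ => ENNReal.toReal_nonneg)
          hf.ennreal_toReal.aemeasurable
    _ = ∫⁻ t in Ioi (0 : ℝ), μ {x | ENNReal.ofReal t < f x} := by
        refine setLIntegral_congr_fun measurableSet_Ioi fun t (ht : 0 < t) => ?_
        simp only [ENNReal.ofReal_lt_iff_lt_toReal ht.le (hf_top _)]

lemma rpow_mul_rpow_le_ofReal_mul_add_ofReal_mul {a b : ℝ} (ha : 0 < a) (hb : 0 < b)
    (hab : a + b = 1) (x y : ℝ≥0∞) :
    x ^ a * y ^ b ≤ ENNReal.ofReal a * x + ENNReal.ofReal b * y := by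
  have h_conj : (a⁻¹).HolderConjugate b⁻¹ := Real.holderConjugate_iff.2
    ⟨(one_lt_inv₀ ha).2 (by linarith), by simpa using hab⟩
  simpa [← ENNReal.rpow_mul, ha.ne', hb.ne', ENNReal.ofReal_inv_of_pos, ha, hb, div_eq_mul_inv,
    mul_comm] using ENNReal.young_inequality (x ^ a) (y ^ b) h_conj

variable {f g h : ℝ → ℝ≥0∞} {a b : ℝ}

lemma smul_superlevel_add_smul_superlevel_subset (ha : 0 < a) (hb : 0 < b) (hab : a + b = 1)
    (hfgh : ∀ x y, f x ^ a * g y ^ b ≤ h (a • x + b • y)) (r : ℝ≥0∞) :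
    a • {x | r < f x} + b • {x | r < g x} ⊆ {x | r < h x} := by
  rintro _ ⟨_, ⟨x, hx, rfl⟩, _, ⟨y, hy, rfl⟩, rfl⟩
  calc r = r ^ a * r ^ b := by
        rw [← ENNReal.rpow_add_of_nonneg _ _ ha.le hb.le, hab, ENNReal.rpow_one]
    _ < f x ^ a * g y ^ b :=
        ENNReal.mul_lt_mul (ENNReal.rpow_lt_rpow hx ha) (ENNReal.rpow_lt_rpow hy hb)
    _ ≤ h (a • x + b • y) := hfgh x y

lemma ofReal_mul_lintegral_add_le_of_iSup_eq_one (hf : Measurable f) (hg : Measurable g)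
    (hh : Measurable h) (ha : 0 < a) (hb : 0 < b) (hab : a + b = 1) (hf₁ : ⨆ x, f x = 1)
    (hg₁ : ⨆ x, g x = 1) (hfgh : ∀ x y, f x ^ a * g y ^ b ≤ h (a • x + b • y)) :
    ENNReal.ofReal a * (∫⁻ x, f x) + ENNReal.ofReal b * (∫⁻ x, g x) ≤ ∫⁻ x, h x := by
  have hf_le : ∀ x, f x ≤ 1 := fun x => hf₁ ▸ le_iSup f x
  have hg_le : ∀ x, g x ≤ 1 := fun x => hg₁ ▸ le_iSup g x
  have ne_top : ∀ {u : ℝ≥0∞}, u ≤ 1 → u ≠ ∞ := fun hu => ne_top_of_le_ne_top ENNReal.one_ne_top hu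
  have h_meas : ∀ u : ℝ → ℝ≥0∞, Measurable fun t : ℝ => volume {x | ENNReal.ofReal t < u x} :=
    fun u => Antitone.measurable fun s t hst => measure_mono fun x hx =>
      (ENNReal.ofReal_le_ofReal hst).trans_lt hx
  refine le_trans ?_ (lintegral_mono fun x => min_le_left (h x) 1)
  rw [lintegral_eq_lintegral_measure_ofReal_lt hf fun x => ne_top (hf_le x),
    lintegral_eq_lintegral_measure_ofReal_lt hg fun x => ne_top (hg_le x),
    lintegral_eq_lintegral_measure_ofReal_lt (hh.min measurable_const)
      fun x => ne_top (min_le_right _ _),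
    ← lintegral_const_mul' _ _ ENNReal.ofReal_ne_top,
    ← lintegral_const_mul' _ _ ENNReal.ofReal_ne_top, ← lintegral_add_left ((h_meas f).const_mul _)]
  refine setLIntegral_mono (h_meas _) fun t _ => ?_
  rcases lt_or_ge (ENNReal.ofReal t) 1 with ht | ht
  · calc ENNReal.ofReal a * volume {x | ENNReal.ofReal t < f x} +
          ENNReal.ofReal b * volume {x | ENNReal.ofReal t < g x}
        ≤ volume (a • {x | ENNReal.ofReal t < f x} + b • {x | ENNReal.ofReal t < g x}) :=
          ofReal_mul_volume_add_ofReal_mul_volume_le (measurableSet_lt measurable_const hf)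
            (measurableSet_lt measurable_const hg) (lt_iSup_iff.1 (ht.trans_eq hf₁.symm))
            (lt_iSup_iff.1 (ht.trans_eq hg₁.symm)) ha.le hb.le
      _ ≤ volume {x | ENNReal.ofReal t < min (h x) 1} := measure_mono fun x hx =>
          lt_min (smul_superlevel_add_smul_superlevel_subset ha hb hab hfgh _ hx) ht
  · simp [((hf_le _).trans ht).not_gt, ((hg_le _).trans ht).not_gt]

lemma lintegral_rpow_mul_lintegral_rpow_le_of_iSup_ne_top (hf : Measurable f) (hg : Measurable g)
    (hh : Measurable h) (ha : 0 < a) (hb : 0 < b) (hab : a + b = 1) (hf_top : ⨆ x, f x ≠ ∞)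
    (hg_top : ⨆ x, g x ≠ ∞) (hfgh : ∀ x y, f x ^ a * g y ^ b ≤ h (a • x + b • y)) :
    (∫⁻ x, f x) ^ a * (∫⁻ x, g x) ^ b ≤ ∫⁻ x, h x := by
  set M := ⨆ x, f x
  set N := ⨆ x, g x
  rcases eq_or_ne M 0 with hM | hM
  · simp [ENNReal.iSup_eq_zero.1 hM, ENNReal.zero_rpow_of_pos ha]
  rcases eq_or_ne N 0 with hN | hN
  · simp [ENNReal.iSup_eq_zero.1 hN, ENNReal.zero_rpow_of_pos hb]
  have mul_rpow : ∀ u v x y : ℝ≥0∞, (u * x) ^ a * (v * y) ^ b = u ^ a * v ^ b * (x ^ a * y ^ b) :=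
    fun u v x y => by
      rw [ENNReal.mul_rpow_of_nonneg _ _ ha.le, ENNReal.mul_rpow_of_nonneg _ _ hb.le,
        mul_mul_mul_comm]
  have h_scaled : M⁻¹ ^ a * N⁻¹ ^ b * ((∫⁻ x, f x) ^ a * (∫⁻ x, g x) ^ b) ≤
      M⁻¹ ^ a * N⁻¹ ^ b * ∫⁻ x, h x := by
    rw [← mul_rpow, ← lintegral_const_mul _ hf, ← lintegral_const_mul _ hg,
      ← lintegral_const_mul _ hh]
    refine (rpow_mul_rpow_le_ofReal_mul_add_ofReal_mul ha hb hab _ _).trans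
      (ofReal_mul_lintegral_add_le_of_iSup_eq_one (hf.const_mul _) (hg.const_mul _)
        (hh.const_mul _) ha hb hab ?_ ?_ fun x y => ?_)
    · rw [← ENNReal.mul_iSup, ENNReal.inv_mul_cancel hM hf_top]
    · rw [← ENNReal.mul_iSup, ENNReal.inv_mul_cancel hN hg_top]
    · rw [mul_rpow]
      gcongr
      exact hfgh x y
  refine (ENNReal.mul_le_mul_iff_right ?_ ?_).1 h_scaled
  · simp [ENNReal.rpow_eq_zero_iff, hf_top, hg_top, ha.not_gt, hb.not_gt]
  · exact ENNReal.mul_ne_top (ENNReal.rpow_ne_top_of_nonneg ha.le (by simpa using hM))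
      (ENNReal.rpow_ne_top_of_nonneg hb.le (by simpa using hN))

lemma lintegral_eq_iSup_lintegral_min_natCast {α : Type*} [MeasurableSpace α] {μ : Measure α}
    {f : α → ℝ≥0∞} (hf : Measurable f) : ∫⁻ x, f x ∂μ = ⨆ n : ℕ, ∫⁻ x, min (f x) n ∂μ := by
  rw [← lintegral_iSup (fun n => hf.min measurable_const)
    fun m n hmn x => min_le_min_left _ (by exact_mod_cast hmn)]
  simp only [← inf_iSup_eq, ENNReal.iSup_natCast, inf_top_eq]

lemma lintegral_rpow_mul_lintegral_rpow_le (hf : Measurable f) (hg : Measurable g)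
    (hh : Measurable h) (ha : 0 < a) (hb : 0 < b) (hab : a + b = 1)
    (hfgh : ∀ x y, f x ^ a * g y ^ b ≤ h (a • x + b • y)) :
    (∫⁻ x, f x) ^ a * (∫⁻ x, g x) ^ b ≤ ∫⁻ x, h x := by
  have iSup_rpow : ∀ {c : ℝ}, 0 < c → ∀ u : ℕ → ℝ≥0∞, (⨆ n, u n) ^ c = ⨆ n, u n ^ c :=
    fun hc u => (ENNReal.orderIsoRpow _ hc).map_iSup u
  have iSup_min_ne_top : ∀ (u : ℝ → ℝ≥0∞) (n : ℕ), ⨆ x, min (u x) n ≠ ∞ := fun u n =>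
    ne_top_of_le_ne_top (ENNReal.natCast_ne_top n) (iSup_le fun _ => min_le_right _ _)
  simp only [lintegral_eq_iSup_lintegral_min_natCast hf,
    lintegral_eq_iSup_lintegral_min_natCast hg, iSup_rpow ha, iSup_rpow hb, ENNReal.iSup_mul,
    ENNReal.mul_iSup, iSup_le_iff]
  refine fun m n => lintegral_rpow_mul_lintegral_rpow_le_of_iSup_ne_top
    (hf.min measurable_const) (hg.min measurable_const) hh ha hb hab (iSup_min_ne_top f _)
    (iSup_min_ne_top g _) fun x y => le_trans ?_ (hfgh x y)
  gcongr <;> exact min_le_left _ _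

end OneDimensional

section PrekopaLeindler

open scoped Pointwise

variable {E F : Type*} [AddCommGroup E] [Module ℝ E] [AddCommGroup F] [Module ℝ F]

/-- Log-concavity of a function with values in `ℝ≥0∞`, in multiplicative form so that the
value `0` is allowed. -/
def LogConcave (f : E → ℝ≥0∞) : Prop :=
  ∀ ⦃a b : ℝ⦄, 0 < a → 0 < b → a + b = 1 → ∀ x y, f x ^ a * f y ^ b ≤ f (a • x + b • y)

lemma logConcave_ofReal_exp_neg {V : E → ℝ} (hV : ConvexOn ℝ univ V) :
    LogConcave fun x => ENNReal.ofReal (Real.exp (-V x)) := by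
  intro a b ha hb hab x y
  have hV_le : V (a • x + b • y) ≤ a * V x + b * V y :=
    hV.2 (mem_univ x) (mem_univ y) ha.le hb.le hab
  rw [ENNReal.ofReal_rpow_of_pos (Real.exp_pos _), ENNReal.ofReal_rpow_of_pos (Real.exp_pos _),
    ← ENNReal.ofReal_mul (by positivity), ← Real.exp_mul, ← Real.exp_mul, ← Real.exp_add]
  exact ENNReal.ofReal_le_ofReal (Real.exp_le_exp.2 (by linarith))

variable [MeasurableSpace E] [MeasurableSpace F]

/-- The measure `μ` satisfies the Prékopa–Leindler inequality. Applied to indicator functions,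
this says that `μ` is a log-concave measure. -/
def PrekopaLeindler (μ : Measure E) : Prop :=
  ∀ ⦃f g h : E → ℝ≥0∞⦄, Measurable f → Measurable g → Measurable h →
    ∀ ⦃a b : ℝ⦄, 0 < a → 0 < b → a + b = 1 → (∀ x y, f x ^ a * g y ^ b ≤ h (a • x + b • y)) →
      (∫⁻ x, f x ∂μ) ^ a * (∫⁻ x, g x ∂μ) ^ b ≤ ∫⁻ x, h x ∂μ

namespace PrekopaLeindler

variable {μ : Measure E} {ν : Measure F}

lemma map (hμ : PrekopaLeindler μ) (L : E →ₗ[ℝ] F) (hL : Measurable L) :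
    PrekopaLeindler (μ.map L) := by
  intro f g h hf hg hh a b ha hb hab hfgh
  rw [lintegral_map hf hL, lintegral_map hg hL, lintegral_map hh hL]
  exact hμ (hf.comp hL) (hg.comp hL) (hh.comp hL) ha hb hab fun x y => by
    simpa using hfgh (L x) (L y)

lemma prod [SFinite ν] (hμ : PrekopaLeindler μ) (hν : PrekopaLeindler ν) :
    PrekopaLeindler (μ.prod ν) := by
  intro f g h hf hg hh a b ha hb hab hfgh
  rw [lintegral_prod _ hf.aemeasurable, lintegral_prod _ hg.aemeasurable,
    lintegral_prod _ hh.aemeasurable]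
  exact hμ hf.lintegral_prod_right' hg.lintegral_prod_right' hh.lintegral_prod_right' ha hb hab
    fun x x' => hν (hf.comp measurable_prodMk_left) (hg.comp measurable_prodMk_left)
      (hh.comp measurable_prodMk_left) ha hb hab fun y y' => hfgh (x, y) (x', y')

lemma withDensity (hμ : PrekopaLeindler μ) {w : E → ℝ≥0∞} (hw_meas : Measurable w)
    (hw : LogConcave w) : PrekopaLeindler (μ.withDensity w) := by
  intro f g h hf hg hh a b ha hb hab hfgh
  simp only [lintegral_withDensity_eq_lintegral_mul _ hw_meas, hf, hg, hh]
  refine hμ (hw_meas.mul hf) (hw_meas.mul hg) (hw_meas.mul hh) ha hb hab fun x y => ?_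
  calc (w x * f x) ^ a * (w y * g y) ^ b = w x ^ a * w y ^ b * (f x ^ a * g y ^ b) := by
        rw [ENNReal.mul_rpow_of_nonneg _ _ ha.le, ENNReal.mul_rpow_of_nonneg _ _ hb.le,
          mul_mul_mul_comm]
    _ ≤ w (a • x + b • y) * h (a • x + b • y) := mul_le_mul' (hw ha hb hab x y) (hfgh x y)

lemma measure_rpow_mul_measure_rpow_le (hμ : PrekopaLeindler μ) {A B C : Set E}
    (hA : MeasurableSet A) (hB : MeasurableSet B) (hC : MeasurableSet C) {a b : ℝ} (ha : 0 < a)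
    (hb : 0 < b) (hab : a + b = 1) (hABC : a • A + b • B ⊆ C) : μ A ^ a * μ B ^ b ≤ μ C := by
  simp only [← lintegral_indicator_one, hA, hB, hC]
  refine hμ (measurable_one.indicator hA) (measurable_one.indicator hB)
    (measurable_one.indicator hC) ha hb hab fun x y => ?_
  by_cases hx : x ∈ A
  · by_cases hy : y ∈ B
    · have hxy : a • x + b • y ∈ C :=
        hABC (add_mem_add (smul_mem_smul_set hx) (smul_mem_smul_set hy))
      simp [hx, hy, hxy]
    · simp [hy, ENNReal.zero_rpow_of_pos hb]
  · simp [hx, ENNReal.zero_rpow_of_pos ha]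

end PrekopaLeindler

lemma prekopaLeindler_volume_real : PrekopaLeindler (volume : Measure ℝ) :=
  fun _ _ _ hf hg hh _ _ ha hb hab hfgh =>
    lintegral_rpow_mul_lintegral_rpow_le hf hg hh ha hb hab hfgh

lemma PrekopaLeindler.pi {n : ℕ} {E : Fin n → Type*} [∀ i, AddCommGroup (E i)]
    [∀ i, Module ℝ (E i)] [∀ i, MeasurableSpace (E i)] {μ : ∀ i, Measure (E i)}
    [∀ i, SigmaFinite (μ i)] (hμ : ∀ i, PrekopaLeindler (μ i)) :
    PrekopaLeindler (Measure.pi μ) := by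
  induction n with
  | zero =>
    intro f g h _ _ _ a b _ _ _ hfgh
    simp only [Measure.pi_of_empty μ default, lintegral_dirac]
    convert hfgh default default
  | succ n ih =>
    have h_cons : MeasurePreserving (Fin.consLinearEquiv ℝ E)
        ((μ 0).prod (Measure.pi fun i => μ i.succ)) (Measure.pi μ) := by
      have h_coe : ⇑(Fin.consLinearEquiv ℝ E) = (MeasurableEquiv.piFinSuccAbove E 0).symm := by
        ext p : 1
        exact (Fin.insertNth_zero p.1 p.2).symm
      exact h_coe ▸ (measurePreserving_piFinSuccAbove μ 0).symm
    rw [← h_cons.map_eq]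
    exact ((hμ 0).prod (ih fun i => hμ i.succ)).map (Fin.consLinearEquiv ℝ E).toLinearMap
      h_cons.measurable

lemma PrekopaLeindler.measure_prodMk_preimage_le_smul {ν : Measure F} [MeasurableNeg F]
    [ν.IsNegInvariant] (hν : PrekopaLeindler ν) {s : Set (E × F)} (hs_meas : MeasurableSet s)
    (hs : Convex ℝ s) (hs_symm : s = -s) {c : ℝ} (hc : |c| ≤ 1) (x : E) :
    ν (Prod.mk x ⁻¹' s) ≤ ν (Prod.mk (c • x) ⁻¹' s) := by
  have h_neg : ν (Prod.mk (-x) ⁻¹' s) = ν (Prod.mk x ⁻¹' s) := by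
    rw [← Measure.measure_neg]
    congr 1
    ext y
    conv_rhs => rw [hs_symm]
    simp
  obtain ⟨hc_neg, hc_pos⟩ := abs_le.1 hc
  rcases hc_neg.eq_or_lt with rfl | hc_neg
  · simp [h_neg]
  rcases hc_pos.eq_or_lt with rfl | hc_pos
  · simp
  have ha : 0 < (1 + c) / 2 := by linarith
  have hb : 0 < (1 - c) / 2 := by linarith
  have hab : (1 + c) / 2 + (1 - c) / 2 = 1 := by ring
  have h_subset : ((1 + c) / 2) • (Prod.mk x ⁻¹' s) + ((1 - c) / 2) • (Prod.mk (-x) ⁻¹' s) ⊆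
      Prod.mk (c • x) ⁻¹' s := by
    rintro _ ⟨_, ⟨y, hy, rfl⟩, _, ⟨z, hz, rfl⟩, rfl⟩
    have h_fst : c • x = ((1 + c) / 2) • x + ((1 - c) / 2) • -x := by module
    rw [mem_preimage, h_fst]
    exact hs hy hz ha.le hb.le hab
  calc ν (Prod.mk x ⁻¹' s)
      = ν (Prod.mk x ⁻¹' s) ^ ((1 + c) / 2) * ν (Prod.mk (-x) ⁻¹' s) ^ ((1 - c) / 2) := by
        rw [h_neg, ← ENNReal.rpow_add_of_nonneg _ _ ha.le hb.le, hab, ENNReal.rpow_one]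
    _ ≤ ν (Prod.mk (c • x) ⁻¹' s) := hν.measure_rpow_mul_measure_rpow_le
        (measurable_prodMk_left hs_meas) (measurable_prodMk_left hs_meas)
        (measurable_prodMk_left hs_meas) ha hb hab h_subset

end PrekopaLeindler

section LineAddOrthogonal

variable {E : Type*} [NormedAddCommGroup E] [InnerProductSpace ℝ E]

/-- The parametrisation `(t, z) ↦ t • v + z` of the ambient space by a line and its orthogonal
complement. -/
noncomputable def lineAddOrthogonal (v : E) : ℝ × (ℝ ∙ v)ᗮ →L[ℝ] E :=
  (ContinuousLinearMap.toSpanSingleton ℝ v).coprod (ℝ ∙ v)ᗮ.subtypeL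

lemma lineAddOrthogonal_apply (v : E) (p : ℝ × (ℝ ∙ v)ᗮ) :
    lineAddOrthogonal v p = p.1 • v + p.2 := rfl

variable {v : E}

lemma inner_lineAddOrthogonal_right (hv : ‖v‖ = 1) (p : ℝ × (ℝ ∙ v)ᗮ) :
    ⟪v, lineAddOrthogonal v p⟫ = p.1 := by
  have h_orth : ⟪v, (p.2 : E)⟫ = 0 := Submodule.mem_orthogonal_singleton_iff_inner_right.1 p.2.2
  simp [lineAddOrthogonal_apply, inner_add_right, real_inner_smul_right, h_orth, hv]

lemma inner_lineAddOrthogonal_lineAddOrthogonal (hv : ‖v‖ = 1) (p q : ℝ × (ℝ ∙ v)ᗮ) :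
    ⟪lineAddOrthogonal v p, lineAddOrthogonal v q⟫ = p.1 * q.1 + ⟪p.2, q.2⟫ := by
  have h_orth : ⟪(p.2 : E), v⟫ = 0 := Submodule.mem_orthogonal_singleton_iff_inner_left.1 p.2.2
  rw [lineAddOrthogonal_apply v p, inner_add_left, real_inner_smul_left,
    inner_lineAddOrthogonal_right hv, lineAddOrthogonal_apply, inner_add_right,
    real_inner_smul_right, h_orth, mul_zero, zero_add, Submodule.coe_inner]

lemma lineAddOrthogonal_inner_orthogonalProjectionOnto (hv : ‖v‖ = 1) (x : E) :
    lineAddOrthogonal v (⟪v, x⟫, (ℝ ∙ v)ᗮ.orthogonalProjectionOnto x) = x := by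
  rw [lineAddOrthogonal_apply, ← Submodule.starProjection_unit_singleton ℝ hv]
  exact (ℝ ∙ v).starProjection_add_starProjection_orthogonal x

end LineAddOrthogonal

section StandardGaussian

lemma prekopaLeindler_gaussianReal (m : ℝ) (v : ℝ≥0) : PrekopaLeindler (gaussianReal m v) := by
  rcases eq_or_ne v 0 with rfl | hv
  · intro f g h _ _ _ a b _ _ hab hfgh
    simpa [← add_mul, hab] using hfgh m m
  have : 0 < (v : ℝ) := by positivity
  have h_convex : ConvexOn ℝ univ fun x : ℝ =>
      (2 * v : ℝ)⁻¹ • (x - m) ^ 2 + Real.log √(2 * Real.pi * v) :=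
    ((by simpa [Function.comp_def, sub_eq_add_neg] using
      even_two.convexOn_pow.translate_left (-m) : ConvexOn ℝ univ fun x : ℝ => (x - m) ^ 2).smul
        (by positivity)).add_const _
  have h_pdf : gaussianPDF m v = fun x => ENNReal.ofReal
      (Real.exp (-((2 * v : ℝ)⁻¹ • (x - m) ^ 2 + Real.log √(2 * Real.pi * v)))) := by
    ext x
    rw [gaussianPDF, gaussianPDFReal, neg_add_rev, Real.exp_add, Real.exp_neg,
      Real.exp_log (by positivity), smul_eq_mul, ← neg_mul, neg_div, div_eq_inv_mul, neg_mul]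
  rw [gaussianReal_of_var_ne_zero m hv, h_pdf]
  exact prekopaLeindler_volume_real.withDensity (by fun_prop) (logConcave_ofReal_exp_neg h_convex)

variable {E : Type*} [NormedAddCommGroup E] [InnerProductSpace ℝ E] [FiniteDimensional ℝ E]
  [MeasurableSpace E] [BorelSpace E]

lemma prekopaLeindler_stdGaussian : PrekopaLeindler (stdGaussian E) :=
  (PrekopaLeindler.pi fun _ => prekopaLeindler_gaussianReal 0 1).map
    (Fintype.linearCombination ℝ (stdOrthonormalBasis ℝ E))
    (LinearMap.continuous_of_finiteDimensional _).measurable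

instance isNegInvariant_stdGaussian : (stdGaussian E).IsNegInvariant :=
  ⟨stdGaussian_map (LinearIsometryEquiv.neg ℝ)⟩

lemma integrable_exp_neg_norm_sq_div_two :
    Integrable fun x : E => Real.exp (-‖x‖ ^ 2 / 2) := by
  convert (GaussianFourier.integrable_cexp_neg_mul_sq_norm_add (V := E) (b := 1 / 2) (by simp)
    0 0).re using 2 with x
  have h : -(1 / 2 : ℂ) * ‖x‖ ^ 2 + 0 * ⟪(0 : E), x⟫ = ((-‖x‖ ^ 2 / 2 : ℝ) : ℂ) := by
    push_cast; ring
  rw [h, ← Complex.ofReal_exp]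
  rfl

lemma charFun_withDensity_exp_neg_norm_sq_div_two (t : E) :
    charFun (volume.withDensity fun x : E => ENNReal.ofReal (Real.exp (-‖x‖ ^ 2 / 2))) t =
      ((2 * Real.pi) ^ (Module.finrank ℝ E / 2 : ℝ) : ℝ) * Complex.exp (-‖t‖ ^ 2 / 2) := by
  have h_const : (Real.pi / (1 / 2) : ℂ) ^ (Module.finrank ℝ E / 2 : ℂ) =
      ((2 * Real.pi) ^ (Module.finrank ℝ E / 2 : ℝ) : ℝ) := by
    rw [Complex.ofReal_cpow (by positivity)]
    push_cast
    ring_nf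
  calc charFun (volume.withDensity fun x : E => ENNReal.ofReal (Real.exp (-‖x‖ ^ 2 / 2))) t
      = ∫ x : E, Complex.exp (-(1 / 2) * ‖x‖ ^ 2 + Complex.I * ⟪t, x⟫) := by
        rw [charFun_apply, integral_withDensity_eq_integral_toReal_smul (by fun_prop) (by simp)]
        refine integral_congr_ae (.of_forall fun x => ?_)
        simp only [ENNReal.toReal_ofReal (Real.exp_nonneg _), Complex.real_smul,
          Complex.ofReal_exp, ← Complex.exp_add, real_inner_comm x t]
        push_cast
        ring_nf
    _ = (Real.pi / (1 / 2)) ^ (Module.finrank ℝ E / 2 : ℂ) *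
          Complex.exp (Complex.I ^ 2 * ‖t‖ ^ 2 / (4 * (1 / 2))) :=
        GaussianFourier.integral_cexp_neg_mul_sq_norm_add (by simp) _ _
    _ = ((2 * Real.pi) ^ (Module.finrank ℝ E / 2 : ℝ) : ℝ) * Complex.exp (-‖t‖ ^ 2 / 2) := by
        rw [h_const, Complex.I_sq]
        ring_nf

lemma withDensity_exp_neg_norm_sq_div_two :
    (volume : Measure E).withDensity (fun x => ENNReal.ofReal (Real.exp (-‖x‖ ^ 2 / 2))) =
      ENNReal.ofReal ((2 * Real.pi) ^ (Module.finrank ℝ E / 2 : ℝ)) • stdGaussian E := by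
  have : IsFiniteMeasure ((volume : Measure E).withDensity
      fun x => ENNReal.ofReal (Real.exp (-‖x‖ ^ 2 / 2))) :=
    isFiniteMeasure_withDensity_ofReal integrable_exp_neg_norm_sq_div_two.2
  set c : ℝ := (2 * Real.pi) ^ (Module.finrank ℝ E / 2 : ℝ)
  have : IsFiniteMeasure (ENNReal.ofReal c • stdGaussian E) :=
    (stdGaussian E).smul_finite ENNReal.ofReal_ne_top
  refine Measure.ext_of_charFun (funext fun t => ?_)
  rw [charFun_withDensity_exp_neg_norm_sq_div_two, ← charFun_stdGaussian, charFun_apply,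
    charFun_apply, integral_smul_measure, ENNReal.toReal_ofReal (by positivity), Complex.real_smul]

lemma volume_absolutelyContinuous_stdGaussian : (volume : Measure E) ≪ stdGaussian E := by
  have h_density : (volume : Measure E) ≪
      volume.withDensity fun x => ENNReal.ofReal (Real.exp (-‖x‖ ^ 2 / 2)) :=
    withDensity_absolutelyContinuous' (by fun_prop) (by simp [Real.exp_pos])
  rw [withDensity_exp_neg_norm_sq_div_two] at h_density
  exact h_density.trans Measure.smul_absolutelyContinuous

lemma setIntegral_mul_exp_neg_norm_sq_div_two (f : E → ℝ) (s : Set E) :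
    ∫ x in s, f x * Real.exp (-‖x‖ ^ 2 / 2) =
      (2 * Real.pi) ^ (Module.finrank ℝ E / 2 : ℝ) * ∫ x in s, f x ∂stdGaussian E := by
  have h := setIntegral_withDensity_eq_setIntegral_toReal_smul' (μ := (volume : Measure E))
    (f := fun x => ENNReal.ofReal (Real.exp (-‖x‖ ^ 2 / 2))) s (by fun_prop) (by simp) f
  rw [withDensity_exp_neg_norm_sq_div_two, Measure.restrict_smul, integral_smul_measure,
    ENNReal.toReal_ofReal (by positivity)] at h
  simpa [ENNReal.toReal_ofReal, Real.exp_nonneg, mul_comm] using h.symm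

lemma measurePreserving_lineAddOrthogonal {v : E} (hv : ‖v‖ = 1) :
    MeasurePreserving (lineAddOrthogonal v)
      ((gaussianReal 0 1).prod (stdGaussian (ℝ ∙ v)ᗮ)) (stdGaussian E) := by
  refine ⟨(lineAddOrthogonal v).continuous.measurable, ?_⟩
  have : IsProbabilityMeasure (((gaussianReal 0 1).prod (stdGaussian (ℝ ∙ v)ᗮ)).map
    (lineAddOrthogonal v)) := Measure.isProbabilityMeasure_map (by fun_prop)
  refine Measure.ext_of_charFun (funext fun ξ => ?_)
  obtain ⟨⟨τ, ζ⟩, rfl⟩ : ∃ p, lineAddOrthogonal v p = ξ :=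
    ⟨_, lineAddOrthogonal_inner_orthogonalProjectionOnto hv ξ⟩
  have h_norm : ‖lineAddOrthogonal v (τ, ζ)‖ ^ 2 = τ ^ 2 + ‖ζ‖ ^ 2 := by
    rw [← real_inner_self_eq_norm_sq, inner_lineAddOrthogonal_lineAddOrthogonal hv,
      real_inner_self_eq_norm_sq, sq τ]
  calc charFun (((gaussianReal 0 1).prod (stdGaussian (ℝ ∙ v)ᗮ)).map (lineAddOrthogonal v))
        (lineAddOrthogonal v (τ, ζ))
      = charFun (gaussianReal 0 1) τ * charFun (stdGaussian (ℝ ∙ v)ᗮ) ζ := by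
        rw [charFun_apply, charFun_apply, charFun_apply, integral_map (by fun_prop) (by fun_prop),
          ← integral_prod_mul]
        simp only [inner_lineAddOrthogonal_lineAddOrthogonal hv, Complex.ofReal_add, add_mul,
          Complex.exp_add]
        simp [mul_comm]
    _ = charFun (stdGaussian E) (lineAddOrthogonal v (τ, ζ)) := by
        rw [charFun_gaussianReal, charFun_stdGaussian, charFun_stdGaussian, ← Complex.exp_add,
          ← Complex.ofReal_pow ‖lineAddOrthogonal v (τ, ζ)‖, h_norm]
        push_cast
        ring_nf

end StandardGaussian

section Slices

lemma setIntegral_comp_fst_prod {α β : Type*} [MeasurableSpace α] [MeasurableSpace β]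
    {μ : Measure α} {ν : Measure β} [SFinite μ] [IsFiniteMeasure ν] {V : Type*}
    [NormedAddCommGroup V] [NormedSpace ℝ V] [CompleteSpace V] {f : α → V} (hf : Integrable f μ)
    {s : Set (α × β)} (hs : MeasurableSet s) :
    ∫ p in s, f p.1 ∂μ.prod ν = ∫ x, ν.real (Prod.mk x ⁻¹' s) • f x ∂μ := by
  rw [← integral_indicator hs, integral_prod _ ((hf.comp_fst ν).indicator hs)]
  refine integral_congr_ae (.of_forall fun x => ?_)
  calc ∫ y, s.indicator (fun p => f p.1) (x, y) ∂ν
      = ∫ y, (Prod.mk x ⁻¹' s).indicator (fun _ => f x) y ∂ν := rfl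
    _ = ν.real (Prod.mk x ⁻¹' s) • f x := by
      rw [integral_indicator (measurable_prodMk_left hs), setIntegral_const]

lemma not_ae_eq_const_measure_prodMk_preimage {α β : Type*} [MeasurableSpace α]
    [MeasurableSpace β] {μ : Measure α} {ν : Measure β} [SFinite ν] (hμ : μ univ = ∞)
    {s : Set (α × β)} (hs : MeasurableSet s) (hs₀ : μ.prod ν s ≠ 0) (hs_top : μ.prod ν s ≠ ∞)
    (c : ℝ≥0∞) : ¬ ∀ᵐ x ∂μ, ν (Prod.mk x ⁻¹' s) = c := by
  intro h
  rw [Measure.prod_apply hs, lintegral_congr_ae h, lintegral_const, hμ] at hs₀ hs_top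
  rcases eq_or_ne c 0 with rfl | hc
  · simp at hs₀
  · exact hs_top (ENNReal.mul_top hc)

lemma volume_setOf_smul_add_mem_le {E : Type*} [AddCommGroup E] [Module ℝ E] {F : Set E}
    (hF : Convex ℝ F) (hF_symm : F = -F) {v : E} {r : ℝ} (hr : r • v ∉ F) (x : E) :
    volume {t : ℝ | t • v + x ∈ F} ≤ ENNReal.ofReal (2 * |r|) := by
  have hF_neg : ∀ y ∈ F, -y ∈ F := fun y hy => by rwa [hF_symm, Set.mem_neg, neg_neg]
  refine (Real.volume_le_diam _).trans (Metric.ediam_le fun t ht u hu => ?_)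
  rw [edist_dist, Real.dist_eq]
  refine ENNReal.ofReal_le_ofReal (le_of_not_gt fun h_lt => hr ?_)
  -- the midpoint of `t • v + x` and the reflection of `u • v + x`
  have h_mid : ((t - u) / 2) • v ∈ F := by
    convert hF ht (hF_neg _ hu) one_half_pos.le one_half_pos.le (add_halves 1) using 1
    module
  have h_balanced : Balanced ℝ F := (balanced_iff_neg_mem hF).2 fun {y} hy => hF_neg y hy
  refine h_balanced.smul_mem_mono h_mid ?_
  rw [norm_div, Real.norm_eq_abs, Real.norm_eq_abs, Real.norm_two]
  linarith

lemma exists_smul_notMem_of_isBounded {E : Type*} [NormedAddCommGroup E] [NormedSpace ℝ E]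
    {F : Set E} (hF : Bornology.IsBounded F) {v : E} (hv : v ≠ 0) : ∃ r : ℝ, r • v ∉ F := by
  obtain ⟨C, hC⟩ := hF.exists_norm_le
  obtain ⟨r, hr⟩ := NormedSpace.exists_lt_norm ℝ ℝ (C / ‖v‖)
  refine ⟨r, fun h => (hC _ h).not_gt ?_⟩
  rwa [norm_smul, ← div_lt_iff₀ (norm_pos_iff.2 hv)]

end Slices

section Covariance

lemma integral_mul_neg_of_integral_eq_zero {α : Type*} [MeasurableSpace α] {μ : Measure α}
    {w φ : α → ℝ} {c : ℝ} (hw : Integrable w μ) (hwφ : Integrable (fun x => w x * φ x) μ)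
    (hw₀ : ∫ x, w x ∂μ = 0) (h_le : ∀ x, w x * (φ x - c) ≤ 0)
    (h_ne : ¬ ∀ᵐ x ∂μ, w x * (φ x - c) = 0) : ∫ x, w x * φ x ∂μ < 0 := by
  have h_sub : ∀ x, w x * (c - φ x) = w x * c - w x * φ x := fun x => mul_sub _ _ _
  have h_int : Integrable (fun x => w x * (c - φ x)) μ :=
    ((hw.mul_const c).sub hwφ).congr (.of_forall fun x => (h_sub x).symm)
  have h_nonneg : ∀ x, 0 ≤ w x * (c - φ x) := fun x => by linarith [h_le x]
  have h_pos : 0 < ∫ x, w x * (c - φ x) ∂μ := by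
    refine (integral_nonneg h_nonneg).lt_of_ne' fun h_eq => h_ne ?_
    filter_upwards [(integral_eq_zero_iff_of_nonneg h_nonneg h_int).1 h_eq] with x hx
    simp only [Pi.zero_apply] at hx
    linarith
  simp only [h_sub] at h_pos
  rw [integral_sub (hw.mul_const c) hwφ, integral_mul_const, hw₀] at h_pos
  linarith

lemma integrable_sq_sub_one_gaussianReal :
    Integrable (fun t : ℝ => t ^ 2 - 1) (gaussianReal 0 1) :=
  (memLp_id_gaussianReal 2).integrable_sq.sub (integrable_const 1)

lemma integral_sq_sub_one_gaussianReal : ∫ t : ℝ, (t ^ 2 - 1) ∂gaussianReal 0 1 = 0 := by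
  have h_var : ∫ t : ℝ, t ^ 2 ∂gaussianReal 0 1 = 1 := by
    simpa [variance_eq_integral aemeasurable_id] using variance_id_gaussianReal (μ := 0) (v := 1)
  have h_sq : Integrable (fun t : ℝ => t ^ 2) (gaussianReal 0 1) :=
    (memLp_id_gaussianReal 2).integrable_sq
  rw [integral_sub h_sq (integrable_const 1), h_var]
  simp

lemma measurable_of_forall_abs_le {φ : ℝ → ℝ} (hφ : ∀ s t, |s| ≤ |t| → φ t ≤ φ s) :
    Measurable φ := by
  have h_anti : Antitone fun t => φ (max t 0) := fun s t hst => hφ _ _ <| by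
    rw [abs_of_nonneg (le_max_right _ _), abs_of_nonneg (le_max_right _ _)]
    exact max_le_max_right 0 hst
  convert h_anti.measurable.comp measurable_abs using 1
  funext t
  exact le_antisymm (hφ _ _ (by simp)) (hφ _ _ (by simp))

lemma integral_sq_sub_one_mul_gaussianReal_neg {φ : ℝ → ℝ} (hφ_nonneg : ∀ t, 0 ≤ φ t)
    (hφ : ∀ s t, |s| ≤ |t| → φ t ≤ φ s) (hφ_ne : ¬ ∀ᵐ t ∂gaussianReal 0 1, φ t = φ 1) :
    ∫ t, (t ^ 2 - 1) * φ t ∂gaussianReal 0 1 < 0 := by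
  refine integral_mul_neg_of_integral_eq_zero (c := φ 1) integrable_sq_sub_one_gaussianReal
    (integrable_sq_sub_one_gaussianReal.mul_bdd (c := φ 0)
      (measurable_of_forall_abs_le hφ).aestronglyMeasurable
      (.of_forall fun t => ?_)) integral_sq_sub_one_gaussianReal (fun t => ?_)
      fun h => hφ_ne ?_
  · rw [Real.norm_of_nonneg (hφ_nonneg t)]
    exact hφ 0 t (by simp)
  · rcases le_total |t| 1 with ht | ht
    · exact mul_nonpos_of_nonpos_of_nonneg (by linarith [(sq_le_one_iff_abs_le_one t).2 ht])
        (sub_nonneg.2 (hφ t 1 (by simpa using ht)))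
    · exact mul_nonpos_of_nonneg_of_nonpos (by linarith [(one_le_sq_iff_one_le_abs t).2 ht])
        (sub_nonpos.2 (hφ 1 t (by simpa using ht)))
  · filter_upwards [h] with t ht
    rcases mul_eq_zero.1 ht with ht | ht
    · have h_abs : |t| = |1| := sq_eq_sq_iff_abs_eq_abs _ _ |>.1 (by linarith)
      exact le_antisymm (hφ 1 t h_abs.ge) (hφ t 1 h_abs.le)
    · exact sub_eq_zero.1 ht

end Covariance

section GaussianSection

variable {E : Type*} [NormedAddCommGroup E] [InnerProductSpace ℝ E] [FiniteDimensional ℝ E]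
  [MeasurableSpace E] [BorelSpace E] {v : E} {F : Set E}

/-- The Gaussian mass of the section of `F` at height `t` in direction `v`; it is the marginal
density of the standard Gaussian measure restricted to `F`, relative to `gaussianReal 0 1`. -/
noncomputable def gaussianSection (v : E) (F : Set E) (t : ℝ) : ℝ :=
  (stdGaussian (ℝ ∙ v)ᗮ).real (Prod.mk t ⁻¹' (lineAddOrthogonal v ⁻¹' F))

lemma measurePreserving_inner_stdGaussian (hv : ‖v‖ = 1) :
    MeasurePreserving (fun x => ⟪v, x⟫) (stdGaussian E) (gaussianReal 0 1) := by
  have h_mp := measurePreserving_lineAddOrthogonal hv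
  have h_comp : (fun x => ⟪v, x⟫) ∘ lineAddOrthogonal v = Prod.fst :=
    funext (inner_lineAddOrthogonal_right hv)
  rw [← h_mp.map_eq]
  exact MeasurePreserving.map_of_comp (h_comp ▸ measurePreserving_fst) (by fun_prop) h_mp.measurable

lemma setIntegral_inner_stdGaussian (hv : ‖v‖ = 1) (hF : MeasurableSet F) {f : ℝ → ℝ}
    (hf : Integrable f (gaussianReal 0 1)) :
    ∫ x in F, f ⟪v, x⟫ ∂stdGaussian E = ∫ t, f t * gaussianSection v F t ∂gaussianReal 0 1 := by
  have h_mp := measurePreserving_lineAddOrthogonal hv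
  rw [← h_mp.map_eq, setIntegral_map hF ?_ h_mp.measurable.aemeasurable]
  · simp only [inner_lineAddOrthogonal_right hv]
    rw [setIntegral_comp_fst_prod hf (h_mp.measurable hF)]
    simp only [gaussianSection, smul_eq_mul, mul_comm]
  · rw [h_mp.map_eq]
    exact hf.1.comp_measurePreserving (measurePreserving_inner_stdGaussian hv)

lemma gaussianSection_le_of_abs_le (hF : Convex ℝ F) (hF_symm : F = -F) (hF_meas : MeasurableSet F)
    (s t : ℝ) (hst : |s| ≤ |t|) : gaussianSection v F t ≤ gaussianSection v F s := by
  have h_symm : lineAddOrthogonal v ⁻¹' F = -(lineAddOrthogonal v ⁻¹' F) := by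
    ext p
    conv_lhs => rw [hF_symm]
    simp
  have h_ratio : |s / t| ≤ 1 := abs_div s t ▸ div_le_one_of_le₀ hst (abs_nonneg t)
  have h_smul : (s / t) • t = s := div_mul_cancel_of_imp fun ht => by simpa [ht] using hst
  have h_le := prekopaLeindler_stdGaussian.measure_prodMk_preimage_le_smul
    ((lineAddOrthogonal v).continuous.measurable hF_meas)
    (hF.linear_preimage (lineAddOrthogonal v).toLinearMap) h_symm h_ratio t
  rw [h_smul] at h_le
  exact ENNReal.toReal_mono (measure_ne_top _ _) h_le

lemma volume_prod_stdGaussian_preimage_lineAddOrthogonal_le (hF : Convex ℝ F) (hF_symm : F = -F)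
    (hF_meas : MeasurableSet F) {r : ℝ} (hr : r • v ∉ F) :
    volume.prod (stdGaussian (ℝ ∙ v)ᗮ) (lineAddOrthogonal v ⁻¹' F) ≤ ENNReal.ofReal (2 * |r|) := by
  rw [Measure.prod_apply_symm ((lineAddOrthogonal v).continuous.measurable hF_meas)]
  calc ∫⁻ z, volume {t : ℝ | t • v + (z : E) ∈ F} ∂stdGaussian (ℝ ∙ v)ᗮ
      ≤ ∫⁻ _, ENNReal.ofReal (2 * |r|) ∂stdGaussian (ℝ ∙ v)ᗮ :=
        lintegral_mono fun z => volume_setOf_smul_add_mem_le hF hF_symm hr z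
    _ = ENNReal.ofReal (2 * |r|) := by simp

lemma not_ae_eq_const_gaussianSection (hv : ‖v‖ = 1) (hF : Convex ℝ F) (hF_symm : F = -F)
    (hF_meas : MeasurableSet F) (hF₀ : stdGaussian E F ≠ 0) {r : ℝ} (hr : r • v ∉ F) (c : ℝ) :
    ¬ ∀ᵐ t ∂gaussianReal 0 1, gaussianSection v F t = c := by
  intro h
  have h_mp := measurePreserving_lineAddOrthogonal hv
  have h_ne_zero : volume.prod (stdGaussian (ℝ ∙ v)ᗮ) (lineAddOrthogonal v ⁻¹' F) ≠ 0 := fun h₀ =>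
    hF₀ (h_mp.measure_preimage hF_meas.nullMeasurableSet ▸
      (gaussianReal_absolutelyContinuous 0 one_ne_zero).prod .rfl h₀)
  refine not_ae_eq_const_measure_prodMk_preimage Real.volume_univ (h_mp.measurable hF_meas)
    h_ne_zero (ne_top_of_le_ne_top ENNReal.ofReal_ne_top
      (volume_prod_stdGaussian_preimage_lineAddOrthogonal_le hF hF_symm hF_meas hr))
    (ENNReal.ofReal c) ?_
  filter_upwards [gaussianReal_absolutelyContinuous' 0 one_ne_zero h] with t ht
  rw [← ht, gaussianSection, ofReal_measureReal]

theorem setIntegral_inner_sq_sub_one_stdGaussian_neg (hv : ‖v‖ = 1) (hF : Convex ℝ F)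
    (hF_symm : F = -F) (hF_meas : MeasurableSet F) (hF₀ : stdGaussian E F ≠ 0) {r : ℝ}
    (hr : r • v ∉ F) : ∫ x in F, (⟪v, x⟫ ^ 2 - 1) ∂stdGaussian E < 0 := by
  rw [setIntegral_inner_stdGaussian hv hF_meas integrable_sq_sub_one_gaussianReal]
  exact integral_sq_sub_one_mul_gaussianReal_neg (fun _ => measureReal_nonneg)
    (gaussianSection_le_of_abs_le hF hF_symm hF_meas)
    (not_ae_eq_const_gaussianSection hv hF hF_symm hF_meas hF₀ hr _)

theorem integral_convex_symmetric_neg_general (hv : ‖v‖ = 1) (hF : Convex ℝ F) (hF_symm : F = -F)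
    (hF_int : (interior F).Nonempty) (hFv : ∃ r : ℝ, r • v ∉ F) :
    ∫ x in F, (⟪v, x⟫ ^ 2 - 1) * Real.exp (-‖x‖ ^ 2 / 2) < 0 := by
  obtain ⟨r, hr⟩ := hFv
  have h_ae : interior F =ᵐ[volume] F :=
    interior_ae_eq_of_null_frontier (hF.addHaar_frontier volume)
  have h_symm : interior F = -interior F := by
    conv_lhs => rw [hF_symm]
    exact ((Homeomorph.neg E).preimage_interior F).symm
  have h_ne_zero : stdGaussian E (interior F) ≠ 0 := fun h₀ =>
    (isOpen_interior.measure_pos volume hF_int).ne' (volume_absolutelyContinuous_stdGaussian h₀)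
  rw [← setIntegral_congr_set h_ae, setIntegral_mul_exp_neg_norm_sq_div_two]
  exact mul_neg_of_pos_of_neg (by positivity) (setIntegral_inner_sq_sub_one_stdGaussian_neg hv
    hF.interior h_symm measurableSet_interior h_ne_zero fun h => hr (interior_subset h))

end GaussianSection

/-- For a symmetric convex set `F ⊂ ℝ^k` with compact closure and nonempty interior,
`∫_F (x₁² - 1) exp(-‖x‖²/2) dx < 0`. -/
theorem integral_convex_symmetric_neg (k : ℕ) (hk : 0 < k)
    (F : Set (EuclideanSpace ℝ (Fin k)))
    (hFconv : Convex ℝ F) (hFsymm : F = -F)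
    (hFcomp : IsCompact (closure F)) (hFint : (interior F).Nonempty) :
    ∫ x in F, (x ⟨0, hk⟩ ^ 2 - 1) * Real.exp (-‖x‖ ^ 2 / 2) < 0 := by
  have h_line := exists_smul_notMem_of_isBounded (hFcomp.isBounded.subset subset_closure)
    (by simp : EuclideanSpace.single ⟨0, hk⟩ (1 : ℝ) ≠ 0)
  simpa [EuclideanSpace.inner_single_left] using
    integral_convex_symmetric_neg_general (by simp) hFconv hFsymm hFint h_line
end
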